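/- For every integer n ≥ 8 there exists a (not necessarily connected) graph on n vertices with exactly n edges that admits no prime labeling; hence the minimum number of edges μ'(n) of a non-prime graph of order n satisfies μ'(n) ≤ n for all n ≥ 8. (Such graphs are given by t·K_3 when n = 3t, by (t−1)·K_3 ∪ C_4 when n = 3t + 1, and by (t−1)·K_3 ∪ C_5 when n = 3t + 2.) -/

import Mathlib

/-- `α` is a prime labeling of the graph `G` of order `n`: a bijection from the
vertex set onto `{1, 2, ..., n}` such that the labels of adjacent vertices are coprime. -/
def IsPrimeLabeling {V : Type*} (G : SimpleGraph V) (α : V → ℕ) : Prop :=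
  Function.Injective α ∧
  Set.range α = Set.Icc 1 (Nat.card V) ∧
  ∀ u v, G.Adj u v → Nat.Coprime (α u) (α v)

/-- A graph is prime if it admits a prime labeling. -/
def IsPrimeGraph {V : Type*} (G : SimpleGraph V) : Prop :=
  ∃ α : V → ℕ, IsPrimeLabeling G α

/-!
In a prime labeling the vertices with even label are pairwise non-adjacent, so a prime graph of
order `n` has an independent set of `⌊n / 2⌋` vertices. On the other hand an independent set has at
most one vertex in each triangle and, by regularity, at most half of the vertices of a cycle. Hence
the `2`-regular graph made of `s` triangles and a `k`-cycle, which has as many edges as vertices, is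
non-prime as soon as `s + ⌊k / 2⌋ < ⌊(3 * s + k) / 2⌋`.
-/

open SimpleGraph Finset

variable {V W : Type*}

theorem IsPrimeGraph.of_iso {G : SimpleGraph V} {H : SimpleGraph W} (e : G ≃g H)
    (hH : IsPrimeGraph H) : IsPrimeGraph G := by
  obtain ⟨α, hinj, hrange, hcop⟩ := hH
  refine ⟨α ∘ e, hinj.comp e.injective, ?_, fun u v huv ↦ hcop _ _ (e.map_adj_iff.2 huv)⟩
  rw [e.surjective.range_comp, hrange, Nat.card_congr e.toEquiv]

theorem IsPrimeLabeling.isIndepSet_setOf_dvd {G : SimpleGraph V} {α : V → ℕ}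
    (hα : IsPrimeLabeling G α) {d : ℕ} (hd : d ≠ 1) : G.IsIndepSet {v | d ∣ α v} :=
  fun u hu v hv _ huv ↦ hd (Nat.eq_one_of_dvd_coprimes (hα.2.2 u v huv) hu hv)

theorem IsPrimeLabeling.card_filter_dvd [Fintype V] {G : SimpleGraph V} {α : V → ℕ}
    (hα : IsPrimeLabeling G α) (d : ℕ) : #{v | d ∣ α v} = Fintype.card V / d := by
  classical
  have image_eq : univ.image α = Ioc 0 (Fintype.card V) := by
    rw [← coe_inj, coe_image, coe_univ, Set.image_univ, hα.2.1, Nat.card_eq_fintype_card,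
      ← coe_Icc, ← Icc_add_one_left_eq_Ioc, zero_add]
  rw [← Nat.Ioc_filter_dvd_card_eq_div, ← image_eq, filter_image, card_image_of_injective _ hα.1]

theorem IsPrimeGraph.card_div_le_indepNum [Fintype V] {G : SimpleGraph V} (hG : IsPrimeGraph G)
    {d : ℕ} (hd : d ≠ 1) : Fintype.card V / d ≤ G.indepNum := by
  obtain ⟨α, hα⟩ := hG
  rw [← hα.card_filter_dvd d]
  refine IsIndepSet.card_le_indepNum ?_
  simpa only [coe_filter_univ] using hα.isIndepSet_setOf_dvd hd

theorem indepNum_sum_le [Finite V] [Finite W] (G : SimpleGraph V) (H : SimpleGraph W) :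
    (G ⊕g H).indepNum ≤ G.indepNum + H.indepNum := by
  obtain ⟨S, hS, hcard⟩ := (G ⊕g H).exists_isNIndepSet_indepNum
  have left_indep : G.IsIndepSet (S.toLeft : Set V) := fun u hu v hv huv hadj ↦
    hS (mem_toLeft.1 hu) (mem_toLeft.1 hv) (Sum.inl_injective.ne huv) (sum_adj_inl.2 hadj)
  have right_indep : H.IsIndepSet (S.toRight : Set W) := fun u hu v hv huv hadj ↦
    hS (mem_toRight.1 hu) (mem_toRight.1 hv) (Sum.inr_injective.ne huv) (sum_adj_inr.2 hadj)
  rw [← hcard, ← card_toLeft_add_card_toRight]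
  exact add_le_add left_indep.card_le_indepNum right_indep.card_le_indepNum

theorem indepNum_boxProd_top_le [Fintype V] (G : SimpleGraph V) :
    (G □ (⊤ : SimpleGraph W)).indepNum ≤ Fintype.card V := by
  obtain ⟨S, hS, hcard⟩ := (G □ (⊤ : SimpleGraph W)).exists_isNIndepSet_indepNum
  have fst_injOn : Set.InjOn Prod.fst (S : Set (V × W)) := by
    rintro ⟨a, b⟩ hb ⟨_, c⟩ hc rfl
    by_contra hbc
    exact hS hb hc hbc (boxProd_adj_right.2 fun h ↦ hbc (congrArg _ h))
  rw [← hcard, ← card_univ]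
  exact card_le_card_of_injOn Prod.fst (fun _ _ ↦ mem_univ _) fst_injOn

theorem two_mul_indepNum_le_card_of_isRegularOfDegree [Fintype V] {G : SimpleGraph V}
    [LocallyFinite G] {d : ℕ} (hG : G.IsRegularOfDegree d) (hd : 0 < d) :
    2 * G.indepNum ≤ Fintype.card V := by
  classical
  obtain ⟨S, hS, hcard⟩ := G.exists_isNIndepSet_indepNum
  have above_eq {u : V} (hu : u ∈ S) : Sᶜ.bipartiteAbove G.Adj u = G.neighborFinset u := by
    ext v
    simp only [bipartiteAbove, mem_filter, mem_compl, mem_neighborFinset, and_iff_right_iff_imp]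
    exact fun huv hv ↦ hS hu hv huv.ne huv
  have below_subset (v : V) : S.bipartiteBelow G.Adj v ⊆ G.neighborFinset v := fun u hu ↦
    (G.mem_neighborFinset v u).2 (mem_bipartiteBelow G.Adj |>.1 hu).2.symm
  have card_le_compl : #S ≤ #Sᶜ := by
    refine Nat.le_of_mul_le_mul_right (card_mul_le_card_mul G.Adj ?_ ?_) hd
    · intro u hu
      rw [above_eq hu, card_neighborFinset_eq_degree, hG u]
    · intro v _
      rw [← hG v, ← card_neighborFinset_eq_degree]
      exact card_le_card (below_subset v)
  rw [← hcard, ← card_add_card_compl S]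
  lia

theorem two_mul_card_edgeSet_of_isRegularOfDegree [Fintype V] {G : SimpleGraph V}
    [LocallyFinite G] {d : ℕ} (hG : G.IsRegularOfDegree d) :
    2 * Nat.card G.edgeSet = Fintype.card V * d := by
  classical
  rw [Nat.card_eq_fintype_card, ← edgeFinset_card, ← sum_degrees_eq_twice_card_edges,
    sum_const_nat fun v _ ↦ ?_, card_univ]
  convert hG v

theorem isRegularOfDegree_boxProd {G : SimpleGraph V} {H : SimpleGraph W} [LocallyFinite G]
    [LocallyFinite H] [LocallyFinite (G □ H)] {c d : ℕ} (hG : G.IsRegularOfDegree c)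
    (hH : H.IsRegularOfDegree d) : (G □ H).IsRegularOfDegree (c + d) := fun x ↦ by
  rw [degree_boxProd, hG, hH]

theorem isRegularOfDegree_two_cycleGraph {k : ℕ} (hk : 3 ≤ k) :
    (cycleGraph k).IsRegularOfDegree 2 := by
  obtain ⟨m, rfl⟩ := Nat.exists_eq_add_of_le' hk
  exact fun _ ↦ cycleGraph_degree_three_le

/-- The disjoint union `s · K₃ ∪ C_k`, with the copies of `K₃` encoded as the box product of an
edgeless graph with `K₃`. For `k < 3` the second summand `cycleGraph k` is not a genuine cycle. -/
def trianglesSumCycle (s k : ℕ) : SimpleGraph (Fin s × Fin 3 ⊕ Fin k) :=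
  ((⊥ : SimpleGraph (Fin s)) □ (⊤ : SimpleGraph (Fin 3))) ⊕g cycleGraph k

theorem card_edgeSet_trianglesSumCycle (s : ℕ) {k : ℕ} (hk : 3 ≤ k) :
    Nat.card (trianglesSumCycle s k).edgeSet = s * 3 + k := by
  have triangles := two_mul_card_edgeSet_of_isRegularOfDegree
    (isRegularOfDegree_boxProd (IsRegularOfDegree.bot (V := Fin s))
      (IsRegularOfDegree.top (V := Fin 3)))
  have cycle := two_mul_card_edgeSet_of_isRegularOfDegree (isRegularOfDegree_two_cycleGraph hk)
  simp only [Fintype.card_prod, Fintype.card_fin] at triangles cycle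
  rw [trianglesSumCycle, Nat.card_congr edgeSetSumEquiv, Nat.card_sum]
  lia

theorem indepNum_trianglesSumCycle_le (s : ℕ) {k : ℕ} (hk : 3 ≤ k) :
    (trianglesSumCycle s k).indepNum ≤ s + k / 2 := by
  have triangles := indepNum_boxProd_top_le (W := Fin 3) (⊥ : SimpleGraph (Fin s))
  have cycle := two_mul_indepNum_le_card_of_isRegularOfDegree
    (isRegularOfDegree_two_cycleGraph hk) two_pos
  rw [Fintype.card_fin] at triangles cycle
  refine (indepNum_sum_le _ _).trans (add_le_add triangles ?_)
  lia

theorem not_isPrimeGraph_trianglesSumCycle {s k : ℕ} (hk : 3 ≤ k)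
    (hsk : s + k / 2 < (s * 3 + k) / 2) : ¬ IsPrimeGraph (trianglesSumCycle s k) := by
  intro hprime
  have half_le := hprime.card_div_le_indepNum (d := 2) (by decide)
  simp only [Fintype.card_sum, Fintype.card_prod, Fintype.card_fin] at half_le
  exact (half_le.trans (indepNum_trianglesSumCycle_le s hk)).not_gt hsk

/-- For every `n ≥ 8` there is a (not necessarily connected) non-prime
graph on `n` vertices with exactly `n` edges; hence `μ'(n) ≤ n` for all `n ≥ 8`. -/
theorem nonprime_graph_n_edges (n : ℕ) (hn : 8 ≤ n) :
    ∃ G : SimpleGraph (Fin n), Nat.card G.edgeSet = n ∧ ¬ IsPrimeGraph G := by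
  obtain ⟨s, k, hk, hsk, rfl⟩ :
      ∃ s k, 3 ≤ k ∧ s + k / 2 < (s * 3 + k) / 2 ∧ n = s * 3 + k :=
    ⟨n / 3 - 1, n % 3 + 3, by lia, by omega, by lia⟩
  have order_eq : Fintype.card (Fin s × Fin 3 ⊕ Fin k) = s * 3 + k := by
    simp only [Fintype.card_sum, Fintype.card_prod, Fintype.card_fin]
  let e := (trianglesSumCycle s k).overFinIso order_eq
  refine ⟨(trianglesSumCycle s k).overFin order_eq, ?_, fun hprime ↦ ?_⟩
  · rw [← Nat.card_congr e.mapEdgeSet, card_edgeSet_trianglesSumCycle s hk]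
  · exact not_isPrimeGraph_trianglesSumCycle hk hsk (hprime.of_iso e)
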